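/- arXiv:1211.1041 — 3 statements merged into one kernel-verified Lean document; each statement's English description precedes it below -/
import Mathlib

section
/- Let d < n ≤ m be positive integers and let L be a subset of a ground set of m points with |L| > (d/n)·m. If V is a set of n points chosen uniformly at random from the m points (without repetition), then the probability that V contains at least d+1 points of L is at least 1/(2n²m). -/
/-- The number of `(n + 1)`-element subsets of `Fin (m + 1)` that contain a given point. -/
lemma card_filter_mem_powersetCard (n m : ℕ) (x : Fin (m + 1)) :
    ((Finset.powersetCard (n + 1) (Finset.univ : Finset (Fin (m + 1)))).filter
      (fun V => x ∈ V)).card = m.choose n := by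
  have hnot : (Finset.powersetCard (n + 1) (Finset.univ : Finset (Fin (m + 1)))).filter
      (fun V => ¬ x ∈ V) = Finset.powersetCard (n + 1) (Finset.univ.erase x) := by
    ext V
    simp only [Finset.mem_filter, Finset.mem_powersetCard, Finset.subset_erase]
    tauto
  have hsplit := Finset.card_filter_add_card_filter_not
    (s := Finset.powersetCard (n + 1) (Finset.univ : Finset (Fin (m + 1)))) (fun V => x ∈ V)
  rw [hnot, Finset.card_powersetCard, Finset.card_powersetCard,
    Finset.card_erase_of_mem (Finset.mem_univ x), Finset.card_univ, Fintype.card_fin,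
    Nat.choose_succ_succ, Nat.add_sub_cancel] at hsplit
  exact Nat.add_right_cancel hsplit

/-- The mean of `|V ∩ L|` over the `n`-element subsets `V` of `Fin m` is `n * |L| / m`. -/
lemma mul_sum_card_inter_powersetCard (n m : ℕ) (hn : 0 < n) (hm : 0 < m)
    (L : Finset (Fin m)) :
    m * ∑ V ∈ Finset.powersetCard n (Finset.univ : Finset (Fin m)), (V ∩ L).card =
      L.card * n * m.choose n := by
  obtain ⟨n, rfl⟩ := Nat.exists_eq_add_one.2 hn
  obtain ⟨m, rfl⟩ := Nat.exists_eq_add_one.2 hm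
  have hsum := Finset.sum_card_inter (s := L)
    (B := Finset.powersetCard (n + 1) (Finset.univ : Finset (Fin (m + 1))))
    (fun x _ => card_filter_mem_powersetCard n m x)
  simp_rw [Finset.inter_comm L] at hsum
  rw [hsum]
  linear_combination L.card * Nat.add_one_mul_choose_eq m n

/-- A ground set of `m` points, inliers `L`, with strictly more than `(d/n)·m` inliers.
A uniformly random `n`-element subset `V` contains at least `d+1` inliers with
probability at least `1/(2n²m)`.  The probability is the number of favorable
`n`-subsets divided by the total number of `n`-subsets. -/
theorem stmt_0 (d n m : ℕ) (hd : 0 < d) (hdn : d < n) (hnm : n ≤ m)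
    (L : Finset (Fin m)) (hL : (d : ℝ) / n * m < (L.card : ℝ)) :
    (1 : ℝ) / (2 * n ^ 2 * m) ≤
      (((Finset.powersetCard n (Finset.univ : Finset (Fin m))).filter
          (fun V => d + 1 ≤ (V ∩ L).card)).card : ℝ) /
        ((Finset.powersetCard n (Finset.univ : Finset (Fin m))).card : ℝ) := by
  have hn : 0 < n := by omega
  have hm : 0 < m := by omega
  have hL' : d * m + 1 ≤ L.card * n := by
    have hn' : (0 : ℝ) < n := by exact_mod_cast hn
    rw [div_mul_eq_mul_div, div_lt_iff₀ hn'] at hL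
    exact_mod_cast hL
  have hmean := mul_sum_card_inter_powersetCard n m hn hm L
  have hcard : (Finset.powersetCard n (Finset.univ : Finset (Fin m))).card = m.choose n := by
    simp
  have hC : 0 < m.choose n := Nat.choose_pos hnm
  have hupper : ∑ V ∈ Finset.powersetCard n (Finset.univ : Finset (Fin m)), (V ∩ L).card ≤
      m.choose n * d + ((Finset.powersetCard n (Finset.univ : Finset (Fin m))).filter
          (fun V => d + 1 ≤ (V ∩ L).card)).card * n := by
    rw [← hcard, Finset.card_filter, Finset.sum_mul, ← smul_eq_mul (b := d),
      ← Finset.sum_const, ← Finset.sum_add_distrib]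
    refine Finset.sum_le_sum fun V hV => ?_
    have hVn : (V ∩ L).card ≤ n :=
      (Finset.card_le_card Finset.inter_subset_left).trans (Finset.mem_powersetCard.1 hV).2.le
    split_ifs <;> omega
  rw [hcard]
  set F := ((Finset.powersetCard n (Finset.univ : Finset (Fin m))).filter
    (fun V => d + 1 ≤ (V ∩ L).card)).card
  have hbound : m.choose n ≤ F * n * m := by
    have hlow := Nat.mul_le_mul_right (m.choose n) hL'
    have hup := Nat.mul_le_mul_left m hupper
    linarith
  have hfinal : m.choose n ≤ F * (2 * n ^ 2 * m) := by
    refine hbound.trans ?_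
    rw [mul_assoc]
    gcongr
    nlinarith
  rw [div_le_div_iff₀ (by positivity) (by exact_mod_cast hC), one_mul]
  exact_mod_cast hfinal
end

section
/- Let A = [u_1,…,u_m] be a real n×m matrix with m ≥ n and rank(A) = n. Then the function φ_A : ℝ^m → ℝ defined by φ_A(t) = log det(∑_{j=1}^m e^{t_j}·u_j u_jᵀ) is convex on ℝ^m. -/
open Matrix in
/-- Expansion of the determinant of `∑ⱼ wⱼ uⱼuⱼᵀ` by multilinearity in the rows. -/
lemma det_sum_smul_vecMulVec_eq_sum {n m : ℕ} (A : Matrix (Fin n) (Fin m) ℝ) (w : Fin m → ℝ) :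
    det (∑ j, w j • vecMulVec (fun i => A i j) (fun i => A i j)) =
      ∑ f : Fin n → Fin m, (∏ i, w (f i)) * (∏ i, A i (f i)) * det (A.submatrix id f) := by
  have hrows : (∑ j, w j • vecMulVec (fun i => A i j) (fun i => A i j)) =
      Matrix.of fun i => ∑ j, (w j * A i j) • fun k => A k j := by
    ext i k
    simp [Matrix.sum_apply, vecMulVec_apply, mul_assoc]
  rw [hrows]
  change detRowAlternating.toMultilinearMap
    (fun i => ∑ j, (w j * A i j) • fun k => A k j) = _
  rw [MultilinearMap.map_sum]
  refine Finset.sum_congr rfl fun f _ => ?_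
  rw [MultilinearMap.map_smul_univ, Finset.prod_mul_distrib, smul_eq_mul,
    ← det_transpose (A.submatrix id f)]
  rfl

open Matrix in
/-- The Cauchy–Binet formula for `∑ⱼ wⱼ uⱼuⱼᵀ`, summed over all functions instead of subsets. -/
lemma factorial_mul_det_sum_smul_vecMulVec {n m : ℕ} (A : Matrix (Fin n) (Fin m) ℝ)
    (w : Fin m → ℝ) :
    (n.factorial : ℝ) * det (∑ j, w j • vecMulVec (fun i => A i j) (fun i => A i j)) =
      ∑ f : Fin n → Fin m, det (A.submatrix id f) ^ 2 * ∏ i, w (f i) := by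
  have hperm (σ : Equiv.Perm (Fin n)) :
      det (∑ j, w j • vecMulVec (fun i => A i j) (fun i => A i j)) =
        ∑ f : Fin n → Fin m, (∏ i, w (f i)) *
          ((Equiv.Perm.sign σ : ℝ) * ∏ i, A i (f (σ i))) * det (A.submatrix id f) := by
    rw [det_sum_smul_vecMulVec_eq_sum, ← (Equiv.arrowCongr σ.symm (Equiv.refl (Fin m))).sum_comp]
    refine Finset.sum_congr rfl fun f _ => ?_
    have hdet := det_permute' σ (A.submatrix id f)
    rw [submatrix_submatrix] at hdet
    have hprod : ∏ i, w (f (σ i)) = ∏ i, w (f i) := Equiv.prod_comp σ fun i => w (f i)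
    change (∏ i, w (f (σ i))) * (∏ i, A i (f (σ i))) * det (A.submatrix (id ∘ id) (f ∘ σ)) = _
    rw [hdet, hprod]
    ring
  have hsum := Finset.sum_congr rfl fun (σ : Equiv.Perm (Fin n)) (_ : σ ∈ Finset.univ) => hperm σ
  rw [Finset.sum_const, Finset.card_univ, Fintype.card_perm, Fintype.card_fin, nsmul_eq_mul,
    Finset.sum_comm] at hsum
  rw [hsum]
  refine Finset.sum_congr rfl fun f _ => ?_
  rw [← Finset.sum_mul, ← Finset.mul_sum]
  have hdet : ∑ σ : Equiv.Perm (Fin n), ((Equiv.Perm.sign σ : ℝ) * ∏ i, A i (f (σ i))) =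
      det (A.submatrix id f) := by
    rw [← det_transpose, det_apply']
    rfl
  rw [hdet]
  ring

/-- A log-sum-exp of linear forms with nonnegative coefficients is convex. -/
lemma convexOn_log_sum_mul_exp {ι E : Type*} [Fintype ι] [AddCommGroup E] [Module ℝ E]
    (c : ι → ℝ) (hc : ∀ i, 0 ≤ c i) (ℓ : ι → E →ₗ[ℝ] ℝ) :
    ConvexOn ℝ Set.univ (fun t => Real.log (∑ i, c i * Real.exp (ℓ i t))) := by
  by_cases h0 : ∀ i, c i = 0
  · simpa [h0] using convexOn_const (0 : ℝ) (convex_univ (𝕜 := ℝ) (E := E))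
  push Not at h0
  obtain ⟨k, hk⟩ := h0
  have hpos (t : E) : 0 < ∑ i, c i * Real.exp (ℓ i t) :=
    Finset.sum_pos' (fun i _ => mul_nonneg (hc i) (Real.exp_pos _).le)
      ⟨k, Finset.mem_univ k, mul_pos ((hc k).lt_of_ne' hk) (Real.exp_pos _)⟩
  refine ⟨convex_univ, fun x _ y _ a b ha hb hab => ?_⟩
  set X := Real.log (∑ i, c i * Real.exp (ℓ i x))
  set Y := Real.log (∑ i, c i * Real.exp (ℓ i y))
  have hnorm (t : E) :
      ∑ i, c i * Real.exp (ℓ i t - Real.log (∑ i, c i * Real.exp (ℓ i t))) = 1 := by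
    simp_rw [Real.exp_sub, Real.exp_log (hpos t), ← mul_div_assoc]
    rw [← Finset.sum_div, div_self (hpos t).ne']
  have hle : ∑ i, c i * Real.exp (ℓ i (a • x + b • y) - (a * X + b * Y)) ≤ 1 := by
    calc
      _ ≤ ∑ i, c i * (a * Real.exp (ℓ i x - X) + b * Real.exp (ℓ i y - Y)) := by
        refine Finset.sum_le_sum fun i _ => mul_le_mul_of_nonneg_left ?_ (hc i)
        have h := convexOn_exp.2 (Set.mem_univ (ℓ i x - X)) (Set.mem_univ (ℓ i y - Y)) ha hb hab
        simp only [smul_eq_mul] at h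
        convert h using 2
        simp only [map_add, map_smul, smul_eq_mul]
        ring
      _ = a * ∑ i, c i * Real.exp (ℓ i x - X) + b * ∑ i, c i * Real.exp (ℓ i y - Y) := by
        rw [Finset.mul_sum, Finset.mul_sum, ← Finset.sum_add_distrib]
        exact Finset.sum_congr rfl fun i _ => by ring
      _ = 1 := by rw [hnorm x, hnorm y, mul_one, mul_one, hab]
  simp_rw [Real.exp_sub, ← mul_div_assoc] at hle
  rw [← Finset.sum_div, div_le_one (Real.exp_pos _)] at hle
  exact (Real.log_le_iff_le_exp (hpos _)).2 hle

/-- The function `φ_A(t) = log det(∑ⱼ e^{tⱼ} uⱼuⱼᵀ)` is convex on `ℝ^m`. -/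
theorem stmt_9 (n m : ℕ) (hnm : n ≤ m) (A : Matrix (Fin n) (Fin m) ℝ)
    (hrank : A.rank = n) :
    ConvexOn ℝ Set.univ (fun t : Fin m → ℝ =>
      Real.log (Matrix.det (∑ j : Fin m,
        Real.exp (t j) • Matrix.vecMulVec (fun i => A i j) (fun i => A i j)))) := by
  have hfact : (n.factorial : ℝ) ≠ 0 := Nat.cast_ne_zero.2 n.factorial_ne_zero
  refine (convexOn_log_sum_mul_exp
    (fun f : Fin n → Fin m => (A.submatrix id f).det ^ 2 / n.factorial)
    (fun f => by positivity)
    (fun f => ∑ i, (LinearMap.proj (f i) : (Fin m → ℝ) →ₗ[ℝ] ℝ))).congr fun t _ => congrArg Real.log ?_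
  symm
  rw [← mul_right_inj' hfact, factorial_mul_det_sum_smul_vecMulVec, Finset.mul_sum]
  refine Finset.sum_congr rfl fun f _ => ?_
  rw [LinearMap.sum_apply, Real.exp_sum]
  simp only [LinearMap.proj_apply]
  field_simp
end

section
/- Let v_1,…,v_m ∈ ℝⁿ be unit vectors and let d ≤ n be a positive integer. Suppose there exists a linear subspace T ⊆ ℝⁿ with dim(T) = d such that strictly more than (d/n)·m of the vectors v_1,…,v_m lie in T. Then (n/m)·∑_{j=1}^m v_j v_jᵀ ≠ Id_n; in particular, the vectors cannot be in radial isotropic position with respect to the coefficient vector (n/m)·𝟏. -/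
/-- If `c • ∑ⱼ vⱼvⱼᵀ = 1`, then `c * ∑ⱼ ⟪x, vⱼ⟫² = ‖x‖²` for every `x`. -/
theorem mul_sum_inner_sq_eq_norm_sq {ι κ : Type*} [Fintype ι] [DecidableEq ι] [Fintype κ]
    (c : ℝ) (v : κ → ι → ℝ)
    (h : c • (∑ j, Matrix.vecMulVec (v j) (v j)) = (1 : Matrix ι ι ℝ))
    (x : EuclideanSpace ℝ ι) :
    c * ∑ j, (inner ℝ x (WithLp.toLp 2 (v j))) ^ 2 = ‖x‖ ^ 2 := by
  have hx := congrArg (fun M : Matrix ι ι ℝ => x.ofLp ⬝ᵥ M.mulVec x.ofLp) h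
  simp only [Matrix.smul_mulVec, Matrix.sum_mulVec, Matrix.vecMulVec_mulVec, Matrix.one_mulVec,
    dotProduct_smul, dotProduct_sum, smul_eq_mul] at hx
  rw [← real_inner_self_eq_norm_sq, EuclideanSpace.inner_eq_star_dotProduct, star_trivial, ← hx]
  congr 1
  refine Finset.sum_congr rfl fun j _ => ?_
  rw [EuclideanSpace.inner_eq_star_dotProduct, star_trivial, sq]
  simp [dotProduct_comm (v j)]

/-- If `c • ∑ⱼ vⱼvⱼᵀ = 1` with `c ≥ 0` and unit vectors `vⱼ`, then a subspace `T` contains at most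
`dim T / c` of the vectors. -/
theorem mul_ncard_mem_le_finrank {ι κ : Type*} [Fintype ι] [DecidableEq ι] [Fintype κ]
    {c : ℝ} (hc : 0 ≤ c) (v : κ → ι → ℝ) (hunit : ∀ j, ∑ i, (v j i) ^ 2 = 1)
    (h : c • (∑ j, Matrix.vecMulVec (v j) (v j)) = (1 : Matrix ι ι ℝ))
    (T : Submodule ℝ (ι → ℝ)) :
    c * ({j | v j ∈ T}.ncard : ℝ) ≤ Module.finrank ℝ T := by
  classical
  let e := WithLp.linearEquiv 2 ℝ (ι → ℝ)
  let S : Submodule ℝ (EuclideanSpace ℝ ι) := T.map e.symm.toLinearMap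
  have hS : Module.finrank ℝ S = Module.finrank ℝ T := LinearEquiv.finrank_map_eq e.symm T
  let b := stdOrthonormalBasis ℝ S
  have htrace : c * ∑ j, ∑ k, (inner ℝ (b k : EuclideanSpace ℝ ι) (WithLp.toLp 2 (v j))) ^ 2
      = Module.finrank ℝ T := by
    rw [Finset.sum_comm, Finset.mul_sum]
    rw [Finset.sum_congr rfl fun k _ => mul_sum_inner_sq_eq_norm_sq c v h (b k)]
    have hb : ∀ k, ‖(b k : EuclideanSpace ℝ ι)‖ ^ 2 = 1 := fun k => by
      rw [Submodule.norm_coe, b.norm_eq_one, one_pow]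
    rw [Finset.sum_congr rfl fun k _ => hb k, Finset.sum_const, Finset.card_univ,
      Fintype.card_fin, hS, nsmul_one]
  rw [← htrace]
  refine mul_le_mul_of_nonneg_left ?_ hc
  have hcard : ({j | v j ∈ T}.ncard : ℝ) = ∑ j, if v j ∈ T then (1 : ℝ) else 0 := by
    rw [Finset.sum_boole, Set.ncard_eq_toFinset_card', Set.toFinset_ofPred]
  rw [hcard]
  refine Finset.sum_le_sum fun j _ => ?_
  split_ifs with hj
  · let w : S := ⟨WithLp.toLp 2 (v j), Submodule.mem_map_of_mem hj⟩
    have hw := b.sum_sq_norm_inner_right w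
    have hnorm : ‖w‖ ^ 2 = 1 := by
      rw [← Submodule.norm_coe, EuclideanSpace.real_norm_sq_eq]
      exact hunit j
    rw [hnorm] at hw
    simp only [Real.norm_eq_abs, sq_abs, Submodule.coe_inner] at hw
    exact hw.ge
  · positivity

/-- If unit vectors `v₁,…,v_m` are such that strictly more than `(d/n)·m` of them lie in a
`d`-dimensional subspace `T`, then `(n/m)·∑ⱼ vⱼvⱼᵀ ≠ Id`, i.e. the vectors are not in
radial isotropic position with respect to the coefficient vector `(n/m)·𝟏`. -/
theorem stmt_16 (n m d : ℕ) (hd : 0 < d) (hdn : d ≤ n)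
    (v : Fin m → (Fin n → ℝ)) (hunit : ∀ j, ∑ i, (v j i) ^ 2 = 1)
    (T : Submodule ℝ (Fin n → ℝ)) (hT : Module.finrank ℝ T = d)
    (hmany : (d : ℝ) / n * m < ({j : Fin m | v j ∈ T}.ncard : ℝ)) :
    ((n : ℝ) / m) • (∑ j : Fin m, Matrix.vecMulVec (v j) (v j))
      ≠ (1 : Matrix (Fin n) (Fin n) ℝ) := by
  intro h
  have hle := mul_ncard_mem_le_finrank (by positivity) v hunit h T
  rw [hT] at hle
  have hn : (0 : ℝ) < n := by exact_mod_cast hd.trans_le hdn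
  rcases Nat.eq_zero_or_pos m with rfl | hm
  · simp [Set.eq_empty_of_isEmpty] at hmany
  · have hm : (0 : ℝ) < m := by exact_mod_cast hm
    have hlt := mul_lt_mul_of_pos_left hmany (div_pos hn hm)
    have heq : (n : ℝ) / m * (d / n * m) = d := by field_simp
    linarith
end
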